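/- arXiv:2602.12671 — 3 statements merged into one kernel-verified Lean document; each statement's English description precedes it below -/
import Mathlib

section
/- Let (C, Δ₀, α, R) be a Hom-coassociative Rota-Baxter coalgebra of weight λ over a field of characteristic 0. Define Δ₋₁ = (I⊗R)∘Δ₀, Δ₁ = (R⊗I)∘Δ₀ and Δ̄₀ = λΔ₀. Then (C, Δ₋₁, Δ̄₀, Δ₁, α) is a Hom-tridendriform coalgebra. -/
open TensorProduct

noncomputable section

variable {F : Type*} [Field F] [CharZero F]
variable {C : Type*} [AddCommGroup C] [Module F C]

/-- The flip `τ : x ⊗ y ↦ y ⊗ x` on `C ⊗ C`. -/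
def tw : C ⊗[F] C →ₗ[F] C ⊗[F] C := (TensorProduct.comm F C C).toLinearMap

/-- `(f ⊗ g)` (followed by the associator), for `f : C → C ⊗ C`, `g : C → C`. -/
def rT (f : C →ₗ[F] C ⊗[F] C) (g : C →ₗ[F] C) :
    C ⊗[F] C →ₗ[F] C ⊗[F] (C ⊗[F] C) :=
  (TensorProduct.assoc F C C C).toLinearMap ∘ₗ TensorProduct.map f g

/-- `(g ⊗ f)` for `g : C → C`, `f : C → C ⊗ C`. -/
def lT (g : C →ₗ[F] C) (f : C →ₗ[F] C ⊗[F] C) :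
    C ⊗[F] C →ₗ[F] C ⊗[F] (C ⊗[F] C) :=
  TensorProduct.map g f

/-- `τ ⊗ I` acting on `C ⊗ (C ⊗ C)` (swap of the first two factors). -/
def sw12 : C ⊗[F] (C ⊗[F] C) →ₗ[F] C ⊗[F] (C ⊗[F] C) :=
  (TensorProduct.assoc F C C C).toLinearMap ∘ₗ
    TensorProduct.map (tw : C ⊗[F] C →ₗ[F] C ⊗[F] C) (LinearMap.id : C →ₗ[F] C) ∘ₗ
    (TensorProduct.assoc F C C C).symm.toLinearMap

/-- The cyclic permutation `ξ : x ⊗ y ⊗ z ↦ y ⊗ z ⊗ x` on `C ⊗ (C ⊗ C)`. -/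
def cyc : C ⊗[F] (C ⊗[F] C) →ₗ[F] C ⊗[F] (C ⊗[F] C) :=
  TensorProduct.map (LinearMap.id : C →ₗ[F] C) (tw : C ⊗[F] C →ₗ[F] C ⊗[F] C) ∘ₗ sw12

/-- Hom-tridendriform coalgebra axioms for `(C, Δ₋₁, Δ₀, Δ₁, α)`. -/
def IsHomTridendriformCoalgebra (Δm Δ0 Δp : C →ₗ[F] C ⊗[F] C) (α : C →ₗ[F] C) : Prop :=
  (rT Δm α ∘ₗ Δm = lT α (Δm + Δ0 + Δp) ∘ₗ Δm) ∧
  (rT Δp α ∘ₗ Δm = lT α Δm ∘ₗ Δp) ∧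
  (lT α Δp ∘ₗ Δp = rT (Δm + Δ0 + Δp) α ∘ₗ Δp) ∧
  (rT Δm α ∘ₗ Δ0 = lT α Δp ∘ₗ Δ0) ∧
  (rT Δp α ∘ₗ Δ0 = lT α Δ0 ∘ₗ Δp) ∧
  (rT Δ0 α ∘ₗ Δm = lT α Δm ∘ₗ Δ0) ∧
  (rT Δ0 α ∘ₗ Δ0 = lT α Δ0 ∘ₗ Δ0)

/-- Rota-Baxter axioms of weight `lam` on a Hom-coassociative coalgebra `(C, Δ0, α)`. -/
def IsHomCoassociativeRotaBaxter (Δ0 : C →ₗ[F] C ⊗[F] C) (α R : C →ₗ[F] C) (lam : F) : Prop :=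
  (lT α Δ0 ∘ₗ Δ0 = rT Δ0 α ∘ₗ Δ0) ∧
  (R ∘ₗ α = α ∘ₗ R) ∧
  (TensorProduct.map R R ∘ₗ Δ0 =
    (TensorProduct.map R (LinearMap.id : C →ₗ[F] C) ∘ₗ Δ0 +
     TensorProduct.map (LinearMap.id : C →ₗ[F] C) R ∘ₗ Δ0 + lam • Δ0) ∘ₗ R)

/-!
Let `f`, `g`, `k` be endomorphisms such that `f` and `k` commute with `α`. Applying `f ⊗ g ⊗ k` to
both sides of Hom-coassociativity gives
`((f ⊗ g)Δ ⊗ α) ∘ (I ⊗ k)Δ = (α ⊗ (g ⊗ k)Δ) ∘ (f ⊗ I)Δ`.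
Each of the seven tridendriform axioms is this identity for a choice of `f, g, k ∈ {I, R}`, up to
powers of the weight. The Rota-Baxter relation enters only in the two axioms where `R ⊗ R` falls on
one coproduct, and there it produces the sum `Δ₋₁ + Δ̄₀ + Δ₁`.
-/

section AnyCharacteristic

variable {K : Type*} [Field K] {V : Type*} [AddCommGroup V] [Module K V]

theorem rT_comp_map (D : V →ₗ[K] V ⊗[K] V) (α g k : V →ₗ[K] V) :
    rT D α ∘ₗ TensorProduct.map g k = rT (D ∘ₗ g) (α ∘ₗ k) := by
  rw [rT, rT, LinearMap.comp_assoc, ← TensorProduct.map_comp]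

theorem lT_comp_map (α : V →ₗ[K] V) (D : V →ₗ[K] V ⊗[K] V) (f k : V →ₗ[K] V) :
    lT α D ∘ₗ TensorProduct.map f k = lT (α ∘ₗ f) (D ∘ₗ k) :=
  (TensorProduct.map_comp α D f k).symm

theorem rT_map_comp (D : V →ₗ[K] V ⊗[K] V) (α f g k : V →ₗ[K] V) :
    rT (TensorProduct.map f g ∘ₗ D) (k ∘ₗ α) =
      TensorProduct.map f (TensorProduct.map g k) ∘ₗ rT D α := by
  rw [rT, rT, TensorProduct.map_comp, ← LinearMap.comp_assoc, ← LinearMap.comp_assoc,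
    TensorProduct.map_map_comp_assoc_eq]

theorem lT_map_comp (α : V →ₗ[K] V) (D : V →ₗ[K] V ⊗[K] V) (f g k : V →ₗ[K] V) :
    lT (f ∘ₗ α) (TensorProduct.map g k ∘ₗ D) =
      TensorProduct.map f (TensorProduct.map g k) ∘ₗ lT α D :=
  TensorProduct.map_comp f (TensorProduct.map g k) α D

theorem rT_smul (c : K) (D : V →ₗ[K] V ⊗[K] V) (α : V →ₗ[K] V) :
    rT (c • D) α = c • rT D α := by
  rw [rT, rT, TensorProduct.map_smul_left, LinearMap.comp_smul]

theorem lT_smul (c : K) (α : V →ₗ[K] V) (D : V →ₗ[K] V ⊗[K] V) :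
    lT α (c • D) = c • lT α D :=
  TensorProduct.map_smul_right c α D

theorem rT_map_comp_eq_lT_map_comp {Δ : V →ₗ[K] V ⊗[K] V} {α f k : V →ₗ[K] V}
    (coassoc : lT α Δ ∘ₗ Δ = rT Δ α ∘ₗ Δ) (hf : f ∘ₗ α = α ∘ₗ f) (g : V →ₗ[K] V)
    (hk : k ∘ₗ α = α ∘ₗ k) :
    rT (TensorProduct.map f g ∘ₗ Δ) α ∘ₗ TensorProduct.map LinearMap.id k ∘ₗ Δ =
      lT α (TensorProduct.map g k ∘ₗ Δ) ∘ₗ TensorProduct.map f LinearMap.id ∘ₗ Δ :=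
  calc rT (TensorProduct.map f g ∘ₗ Δ) α ∘ₗ TensorProduct.map LinearMap.id k ∘ₗ Δ
    _ = rT (TensorProduct.map f g ∘ₗ Δ) (k ∘ₗ α) ∘ₗ Δ := by
      rw [← LinearMap.comp_assoc, rT_comp_map, LinearMap.comp_id, hk]
    _ = TensorProduct.map f (TensorProduct.map g k) ∘ₗ rT Δ α ∘ₗ Δ := by
      rw [rT_map_comp, LinearMap.comp_assoc]
    _ = TensorProduct.map f (TensorProduct.map g k) ∘ₗ lT α Δ ∘ₗ Δ := by
      rw [coassoc]
    _ = lT (f ∘ₗ α) (TensorProduct.map g k ∘ₗ Δ) ∘ₗ Δ := by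
      rw [lT_map_comp, LinearMap.comp_assoc]
    _ = lT α (TensorProduct.map g k ∘ₗ Δ) ∘ₗ TensorProduct.map f LinearMap.id ∘ₗ Δ := by
      rw [← LinearMap.comp_assoc, lT_comp_map, LinearMap.comp_id, hf]

namespace IsHomCoassociativeRotaBaxter

variable {Δ : V →ₗ[K] V ⊗[K] V} {α R : V →ₗ[K] V} {lam : K}

theorem map_self_comp_eq_sum_comp (h : IsHomCoassociativeRotaBaxter Δ α R lam) :
    TensorProduct.map R R ∘ₗ Δ =
      (TensorProduct.map LinearMap.id R ∘ₗ Δ + lam • Δ +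
        TensorProduct.map R LinearMap.id ∘ₗ Δ) ∘ₗ R := by
  rw [h.2.2]
  congr 1
  abel

theorem rT_map_id_left_comp_map_id_left (h : IsHomCoassociativeRotaBaxter Δ α R lam) :
    rT (TensorProduct.map LinearMap.id R ∘ₗ Δ) α ∘ₗ TensorProduct.map LinearMap.id R ∘ₗ Δ =
      lT α (TensorProduct.map LinearMap.id R ∘ₗ Δ + lam • Δ +
        TensorProduct.map R LinearMap.id ∘ₗ Δ) ∘ₗ TensorProduct.map LinearMap.id R ∘ₗ Δ := by
  rw [rT_map_comp_eq_lT_map_comp (f := LinearMap.id) h.1 rfl R h.2.1,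
    h.map_self_comp_eq_sum_comp, TensorProduct.map_id, LinearMap.id_comp,
    ← LinearMap.comp_assoc, lT_comp_map, LinearMap.comp_id]

theorem lT_map_id_right_comp_map_id_right (h : IsHomCoassociativeRotaBaxter Δ α R lam) :
    lT α (TensorProduct.map R LinearMap.id ∘ₗ Δ) ∘ₗ TensorProduct.map R LinearMap.id ∘ₗ Δ =
      rT (TensorProduct.map LinearMap.id R ∘ₗ Δ + lam • Δ +
        TensorProduct.map R LinearMap.id ∘ₗ Δ) α ∘ₗ TensorProduct.map R LinearMap.id ∘ₗ Δ := by
  rw [← rT_map_comp_eq_lT_map_comp (k := LinearMap.id) h.1 h.2.1 R rfl,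
    h.map_self_comp_eq_sum_comp, TensorProduct.map_id, LinearMap.id_comp,
    ← LinearMap.comp_assoc, rT_comp_map, LinearMap.comp_id]

end IsHomCoassociativeRotaBaxter

theorem rotaBaxter_homTridendriformCoalgebra_general
    (Δ : V →ₗ[K] V ⊗[K] V) (α R : V →ₗ[K] V) (lam : K)
    (h : IsHomCoassociativeRotaBaxter Δ α R lam) :
    IsHomTridendriformCoalgebra
      (TensorProduct.map LinearMap.id R ∘ₗ Δ)
      (lam • Δ)
      (TensorProduct.map R LinearMap.id ∘ₗ Δ) α := by
  have ⟨coassoc, hR, _⟩ := h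
  have hid : LinearMap.id ∘ₗ α = α ∘ₗ LinearMap.id := rfl
  have minus_zero := rT_map_comp_eq_lT_map_comp coassoc hid R hid
  have plus_zero := rT_map_comp_eq_lT_map_comp coassoc hR LinearMap.id hid
  have zero_minus := rT_map_comp_eq_lT_map_comp coassoc hid LinearMap.id hR
  simp only [TensorProduct.map_id, LinearMap.id_comp] at minus_zero plus_zero zero_minus
  refine ⟨h.rT_map_id_left_comp_map_id_left,
    rT_map_comp_eq_lT_map_comp coassoc hR LinearMap.id hR,
    h.lT_map_id_right_comp_map_id_right, ?_, ?_, ?_, ?_⟩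
  · rw [LinearMap.comp_smul, LinearMap.comp_smul, minus_zero]
  · rw [LinearMap.comp_smul, lT_smul, LinearMap.smul_comp, plus_zero]
  · rw [rT_smul, LinearMap.smul_comp, LinearMap.comp_smul, zero_minus]
  · rw [rT_smul, lT_smul, LinearMap.smul_comp, LinearMap.smul_comp, LinearMap.comp_smul,
      LinearMap.comp_smul, coassoc]

end AnyCharacteristic

/-- A Hom-coassociative Rota-Baxter coalgebra of weight `lam` gives rise to a
Hom-tridendriform coalgebra. -/
theorem rotaBaxter_homTridendriformCoalgebra
    (Δ0 : C →ₗ[F] C ⊗[F] C) (α R : C →ₗ[F] C) (lam : F)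
    (h : IsHomCoassociativeRotaBaxter Δ0 α R lam) :
    IsHomTridendriformCoalgebra
      (TensorProduct.map (LinearMap.id : C →ₗ[F] C) R ∘ₗ Δ0)
      (lam • Δ0)
      (TensorProduct.map R (LinearMap.id : C →ₗ[F] C) ∘ₗ Δ0) α :=
  rotaBaxter_homTridendriformCoalgebra_general Δ0 α R lam h
end
end

section
/- Let (C, Δ₀, α, R) be a Hom-coassociative Rota-Baxter coalgebra of weight 0 over a field of characteristic 0. Define Δ = (R⊗I)∘Δ₀ − τ∘(I⊗R)∘Δ₀, where τ is the flip of C⊗C and I the identity. Then (C, Δ, α) is a Hom-preLie coalgebra. -/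
open TensorProduct

noncomputable section

variable {F : Type*} [Field F] [CharZero F]
variable {C : Type*} [AddCommGroup C] [Module F C]

/-- Hom-preLie coalgebra axiom for `(C, Δ, α)`. -/
def IsHomPreLieCoalgebra (Δ : C →ₗ[F] C ⊗[F] C) (α : C →ₗ[F] C) : Prop :=
  rT Δ α ∘ₗ Δ - lT α Δ ∘ₗ Δ = sw12 ∘ₗ (rT Δ α ∘ₗ Δ - lT α Δ ∘ₗ Δ)

/-!
A Rota-Baxter operator `R` of weight `w` splits the coproduct `Δ₀` into the Hom-dendriform pair
`Δ≻ = (R ⊗ I) ∘ Δ₀` and `Δ≺ = (I ⊗ (R + w)) ∘ Δ₀`: both `T = R` and `T = R + w` satisfy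
`(T ⊗ T) ∘ Δ₀ = (Δ≺ + Δ≻) ∘ T`, so each dendriform axiom is Hom-coassociativity followed by a triple
tensor product of operators among `I`, `R`, `R + w`. For any Hom-dendriform pair, the axioms
collapse the eight terms of the Hom-coassociator of `Δ≻ - τ ∘ Δ≺` to six, which `τ ⊗ I` exchanges in
pairs; the Hom-coassociator is therefore of the form `(I + τ ⊗ I) ∘ W`, hence fixed by `τ ⊗ I`.
-/

section IteratedCoproduct

variable {K : Type*} [CommSemiring K]
variable {A X Y M N P : Type*} [AddCommMonoid A] [AddCommMonoid X] [AddCommMonoid Y]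
variable [AddCommMonoid M] [AddCommMonoid N] [AddCommMonoid P]
variable [Module K A] [Module K X] [Module K Y] [Module K M] [Module K N] [Module K P]

/-- The iterated coproduct `(f ⊗ α) ∘ g`, reassociated to the right so that it can be compared with
`iterCoprodRight`. -/
def iterCoprodLeft (α : Y →ₗ[K] P) (f : X →ₗ[K] M ⊗[K] N) (g : A →ₗ[K] X ⊗[K] Y) :
    A →ₗ[K] M ⊗[K] (N ⊗[K] P) :=
  (TensorProduct.assoc K M N P).toLinearMap ∘ₗ map f α ∘ₗ g

/-- The iterated coproduct `(α ⊗ f) ∘ g`. -/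
def iterCoprodRight (α : X →ₗ[K] M) (f : Y →ₗ[K] N ⊗[K] P) (g : A →ₗ[K] X ⊗[K] Y) :
    A →ₗ[K] M ⊗[K] (N ⊗[K] P) :=
  map α f ∘ₗ g

theorem iterCoprodLeft_add_left (α : Y →ₗ[K] P) (f₁ f₂ : X →ₗ[K] M ⊗[K] N)
    (g : A →ₗ[K] X ⊗[K] Y) :
    iterCoprodLeft α (f₁ + f₂) g = iterCoprodLeft α f₁ g + iterCoprodLeft α f₂ g := by
  simp only [iterCoprodLeft, map_add_left, LinearMap.add_comp, LinearMap.comp_add]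

theorem iterCoprodRight_add_left (α : X →ₗ[K] M) (f₁ f₂ : Y →ₗ[K] N ⊗[K] P)
    (g : A →ₗ[K] X ⊗[K] Y) :
    iterCoprodRight α (f₁ + f₂) g = iterCoprodRight α f₁ g + iterCoprodRight α f₂ g := by
  simp only [iterCoprodRight, map_add_right, LinearMap.add_comp]

theorem iterCoprodLeft_map_id_comp {X' : Type*} [AddCommMonoid X'] [Module K X'] (α : Y →ₗ[K] P)
    (f : X →ₗ[K] M ⊗[K] N) (T : X' →ₗ[K] X) (g : A →ₗ[K] X' ⊗[K] Y) :
    iterCoprodLeft α f (map T .id ∘ₗ g) = iterCoprodLeft α (f ∘ₗ T) g := by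
  rw [iterCoprodLeft, iterCoprodLeft, ← LinearMap.comp_assoc _ _ (map f α), ← map_comp,
    LinearMap.comp_id]

theorem iterCoprodRight_map_id_comp {Y' : Type*} [AddCommMonoid Y'] [Module K Y'] (α : X →ₗ[K] M)
    (f : Y →ₗ[K] N ⊗[K] P) (T : Y' →ₗ[K] Y) (g : A →ₗ[K] X ⊗[K] Y') :
    iterCoprodRight α f (map .id T ∘ₗ g) = iterCoprodRight α (f ∘ₗ T) g := by
  rw [iterCoprodRight, iterCoprodRight, ← LinearMap.comp_assoc, ← map_comp, LinearMap.comp_id]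

theorem leftComm_comp_assoc :
    (leftComm K M N P).toLinearMap ∘ₗ (TensorProduct.assoc K M N P).toLinearMap =
      (TensorProduct.assoc K N M P).toLinearMap ∘ₗ
        (TensorProduct.comm K M N).toLinearMap.rTensor P :=
  ext_threefold fun _ _ _ => rfl

theorem assoc_comp_comm :
    (TensorProduct.assoc K N P M).toLinearMap ∘ₗ
        (TensorProduct.comm K M (N ⊗[K] P)).toLinearMap =
      (TensorProduct.comm K M P).toLinearMap.lTensor N ∘ₗ (leftComm K M N P).toLinearMap :=
  ext <| LinearMap.ext fun _ => ext' fun _ _ => rfl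

theorem leftComm_comp_lTensor_comm_comp_assoc :
    (leftComm K M P N).toLinearMap ∘ₗ (TensorProduct.comm K N P).toLinearMap.lTensor M ∘ₗ
        (TensorProduct.assoc K M N P).toLinearMap =
      (TensorProduct.comm K (M ⊗[K] N) P).toLinearMap :=
  ext_threefold fun _ _ _ => rfl

theorem leftComm_comp_leftComm :
    (leftComm K N M P).toLinearMap ∘ₗ (leftComm K M N P).toLinearMap = .id :=
  ext <| LinearMap.ext fun _ => ext' fun _ _ => rfl

theorem leftComm_braid :
    (leftComm K N P M).toLinearMap ∘ₗ (TensorProduct.comm K M P).toLinearMap.lTensor N ∘ₗ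
        (leftComm K M N P).toLinearMap =
      (TensorProduct.comm K M N).toLinearMap.lTensor P ∘ₗ (leftComm K M P N).toLinearMap ∘ₗ
        (TensorProduct.comm K N P).toLinearMap.lTensor M :=
  ext <| LinearMap.ext fun _ => ext' fun _ _ => rfl

theorem iterCoprodLeft_comm_left (α : Y →ₗ[K] P) (f : X →ₗ[K] M ⊗[K] N)
    (g : A →ₗ[K] X ⊗[K] Y) :
    iterCoprodLeft α ((TensorProduct.comm K M N).toLinearMap ∘ₗ f) g =
      (leftComm K M N P).toLinearMap ∘ₗ iterCoprodLeft α f g := by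
  rw [iterCoprodLeft, iterCoprodLeft, ← LinearMap.rTensor_comp_map, LinearMap.comp_assoc,
    ← LinearMap.comp_assoc, ← leftComm_comp_assoc, LinearMap.comp_assoc]

theorem iterCoprodLeft_comm_right (α : Y →ₗ[K] P) (f : X →ₗ[K] M ⊗[K] N)
    (g : A →ₗ[K] Y ⊗[K] X) :
    iterCoprodLeft α f ((TensorProduct.comm K Y X).toLinearMap ∘ₗ g) =
      (TensorProduct.comm K P N).toLinearMap.lTensor M ∘ₗ (leftComm K P M N).toLinearMap ∘ₗ
        iterCoprodRight α f g := by
  rw [iterCoprodLeft, iterCoprodRight, ← LinearMap.comp_assoc _ _ (map f α), map_comp_comm_eq,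
    LinearMap.comp_assoc, ← LinearMap.comp_assoc, assoc_comp_comm, LinearMap.comp_assoc]

theorem iterCoprodRight_comm_left (α : X →ₗ[K] M) (f : Y →ₗ[K] N ⊗[K] P)
    (g : A →ₗ[K] X ⊗[K] Y) :
    iterCoprodRight α ((TensorProduct.comm K N P).toLinearMap ∘ₗ f) g =
      (TensorProduct.comm K N P).toLinearMap.lTensor M ∘ₗ iterCoprodRight α f g := by
  rw [iterCoprodRight, iterCoprodRight, ← LinearMap.lTensor_comp_map, LinearMap.comp_assoc]

theorem iterCoprodRight_comm_right (α : X →ₗ[K] M) (f : Y →ₗ[K] N ⊗[K] P)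
    (g : A →ₗ[K] Y ⊗[K] X) :
    iterCoprodRight α f ((TensorProduct.comm K Y X).toLinearMap ∘ₗ g) =
      (leftComm K N M P).toLinearMap ∘ₗ (TensorProduct.comm K P M).toLinearMap.lTensor N ∘ₗ
        iterCoprodLeft α f g := by
  rw [iterCoprodRight, iterCoprodLeft, ← LinearMap.comp_assoc, map_comp_comm_eq,
    ← leftComm_comp_lTensor_comm_comp_assoc]
  simp only [LinearMap.comp_assoc]

end IteratedCoproduct

section IteratedCoproductSub

variable {K : Type*} [CommRing K]
variable {A X Y M N P : Type*} [AddCommGroup A] [AddCommGroup X] [AddCommGroup Y]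
variable [AddCommGroup M] [AddCommGroup N] [AddCommGroup P]
variable [Module K A] [Module K X] [Module K Y] [Module K M] [Module K N] [Module K P]

theorem iterCoprodLeft_sub_sub (α : Y →ₗ[K] P) (f₁ f₂ : X →ₗ[K] M ⊗[K] N)
    (g₁ g₂ : A →ₗ[K] X ⊗[K] Y) :
    iterCoprodLeft α (f₁ - f₂) (g₁ - g₂) =
      iterCoprodLeft α f₁ g₁ - iterCoprodLeft α f₂ g₁ -
        (iterCoprodLeft α f₁ g₂ - iterCoprodLeft α f₂ g₂) := by
  have map_sub_left : map (f₁ - f₂) α = map f₁ α - map f₂ α :=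
    ext' fun _ _ => sub_tmul _ _ _
  simp only [iterCoprodLeft, map_sub_left, LinearMap.sub_comp, LinearMap.comp_sub]

theorem iterCoprodRight_sub_sub (α : X →ₗ[K] M) (f₁ f₂ : Y →ₗ[K] N ⊗[K] P)
    (g₁ g₂ : A →ₗ[K] X ⊗[K] Y) :
    iterCoprodRight α (f₁ - f₂) (g₁ - g₂) =
      iterCoprodRight α f₁ g₁ - iterCoprodRight α f₂ g₁ -
        (iterCoprodRight α f₁ g₂ - iterCoprodRight α f₂ g₂) := by
  have map_sub_right : map α (f₁ - f₂) = map α f₁ - map α f₂ :=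
    ext' fun _ _ => tmul_sub _ _ _
  simp only [iterCoprodRight, map_sub_right, LinearMap.sub_comp, LinearMap.comp_sub]

end IteratedCoproductSub

section RotaBaxter

variable {K : Type*} [CommSemiring K] {A : Type*} [AddCommMonoid A] [Module K A]
variable {Δ : A →ₗ[K] A ⊗[K] A} {α R : A →ₗ[K] A} {w : K}

/-- `R` is a Rota-Baxter operator of weight `w` for the coproduct `Δ`: the relation dual to
`R a * R b = R (R a * b + a * R b + w • (a * b))` in an algebra. -/
def IsRotaBaxterCooperator (Δ : A →ₗ[K] A ⊗[K] A) (R : A →ₗ[K] A) (w : K) : Prop :=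
  map R R ∘ₗ Δ = (map R .id ∘ₗ Δ + map .id R ∘ₗ Δ + w • Δ) ∘ₗ R

/-- A Hom-dendriform coalgebra: the coproducts `Δprec` and `Δsucc` are dual to the half-products `≺`
and `≻` of a Hom-dendriform algebra, whose sum is the Hom-associative product. -/
structure IsHomDendriformCoalgebra (Δprec Δsucc : A →ₗ[K] A ⊗[K] A) (α : A →ₗ[K] A) : Prop where
  prec_prec : iterCoprodLeft α Δprec Δprec = iterCoprodRight α (Δprec + Δsucc) Δprec
  succ_prec : iterCoprodLeft α Δsucc Δprec = iterCoprodRight α Δprec Δsucc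
  succ_succ : iterCoprodRight α Δsucc Δsucc = iterCoprodLeft α (Δprec + Δsucc) Δsucc

theorem IsRotaBaxterCooperator.map_comp_eq (hR : IsRotaBaxterCooperator Δ R w) :
    map R R ∘ₗ Δ = (map .id (R + w • .id) ∘ₗ Δ + map R .id ∘ₗ Δ) ∘ₗ R := by
  rw [hR]
  simp only [map_add_right, map_smul_right, map_id, LinearMap.add_comp, LinearMap.smul_comp,
    LinearMap.id_comp]
  abel

theorem IsRotaBaxterCooperator.map_add_smul_id_comp_eq (hR : IsRotaBaxterCooperator Δ R w) :
    map (R + w • .id) (R + w • .id) ∘ₗ Δ =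
      (map .id (R + w • .id) ∘ₗ Δ + map R .id ∘ₗ Δ) ∘ₗ (R + w • .id) := by
  rw [LinearMap.comp_add, ← hR.map_comp_eq]
  simp only [map_add_left, map_add_right, map_smul_left, map_smul_right, map_id,
    LinearMap.add_comp, LinearMap.smul_comp, LinearMap.comp_smul, LinearMap.id_comp,
    LinearMap.comp_id, smul_add]
  abel

theorem iterCoprodLeft_map_comp {S : A →ₗ[K] A} (hS : S ∘ₗ α = α ∘ₗ S) (P Q : A →ₗ[K] A)
    (f g : A →ₗ[K] A ⊗[K] A) :
    iterCoprodLeft α (map P Q ∘ₗ f) (map .id S ∘ₗ g) =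
      map P (map Q S) ∘ₗ iterCoprodLeft α f g := by
  rw [iterCoprodLeft, iterCoprodLeft, ← LinearMap.comp_assoc _ _ (map P (map Q S)),
    map_map_comp_assoc_eq, LinearMap.comp_assoc, ← LinearMap.comp_assoc _ _ (map _ α), ← map_comp,
    ← LinearMap.comp_assoc _ _ (map (map P Q) S), ← map_comp, hS, LinearMap.comp_id]

theorem iterCoprodRight_map_comp {P : A →ₗ[K] A} (hP : P ∘ₗ α = α ∘ₗ P) (Q S : A →ₗ[K] A)
    (f g : A →ₗ[K] A ⊗[K] A) :
    iterCoprodRight α (map Q S ∘ₗ f) (map P .id ∘ₗ g) =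
      map P (map Q S) ∘ₗ iterCoprodRight α f g := by
  rw [iterCoprodRight, iterCoprodRight, ← LinearMap.comp_assoc, ← map_comp,
    ← LinearMap.comp_assoc, ← map_comp, hP, LinearMap.comp_id]

theorem IsRotaBaxterCooperator.isHomDendriformCoalgebra (hR : IsRotaBaxterCooperator Δ R w)
    (hcoassoc : iterCoprodRight α Δ Δ = iterCoprodLeft α Δ Δ) (hα : R ∘ₗ α = α ∘ₗ R) :
    IsHomDendriformCoalgebra (map .id (R + w • .id) ∘ₗ Δ) (map R .id ∘ₗ Δ) α := by
  have hid : .id ∘ₗ α = α ∘ₗ .id := rfl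
  have hS : (R + w • .id) ∘ₗ α = α ∘ₗ (R + w • .id) := by
    simp only [LinearMap.add_comp, LinearMap.comp_add, LinearMap.smul_comp, LinearMap.comp_smul,
      LinearMap.id_comp, LinearMap.comp_id, hα]
  have hright := iterCoprodRight_map_comp hid
  have hleft := iterCoprodLeft_map_comp hid
  simp only [map_id, LinearMap.id_comp] at hright hleft
  refine ⟨?_, ?_, ?_⟩
  · rw [iterCoprodLeft_map_comp hS, ← hcoassoc, ← hright, hR.map_add_smul_id_comp_eq,
      iterCoprodRight_map_id_comp]
  · rw [iterCoprodLeft_map_comp hS, iterCoprodRight_map_comp hα, hcoassoc]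
  · rw [iterCoprodRight_map_comp hα, hcoassoc, ← hleft, hR.map_comp_eq,
      iterCoprodLeft_map_id_comp]

end RotaBaxter

section PreLie

variable {K : Type*} [CommRing K] {A : Type*} [AddCommGroup A] [Module K A]
variable {Δ Δprec Δsucc : A →ₗ[K] A ⊗[K] A} {α R : A →ₗ[K] A} {w : K}

/-- The Hom-coassociator `(Δ ⊗ α) ∘ Δ - (α ⊗ Δ) ∘ Δ`, which measures the failure of
Hom-coassociativity. -/
def homCoassociator (Δ : A →ₗ[K] A ⊗[K] A) (α : A →ₗ[K] A) : A →ₗ[K] A ⊗[K] (A ⊗[K] A) :=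
  iterCoprodLeft α Δ Δ - iterCoprodRight α Δ Δ

/-- The Hom-preLie identity for a coproduct on a module over a commutative ring, in terms of the
Hom-coassociator. `TensorProduct.leftComm` is `τ ⊗ I` on right-associated triple tensors. -/
def IsHomPreLieCoproduct (Δ : A →ₗ[K] A ⊗[K] A) (α : A →ₗ[K] A) : Prop :=
  homCoassociator Δ α = (leftComm K A A A).toLinearMap ∘ₗ homCoassociator Δ α

theorem IsHomDendriformCoalgebra.homCoassociator_eq
    (h : IsHomDendriformCoalgebra Δprec Δsucc α) :
    homCoassociator (Δsucc - (TensorProduct.comm K A A).toLinearMap ∘ₗ Δprec) α =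
      (.id + (leftComm K A A A).toLinearMap) ∘ₗ
        ((TensorProduct.comm K A A).toLinearMap.lTensor A ∘ₗ iterCoprodRight α Δprec Δsucc -
          iterCoprodLeft α Δprec Δsucc -
          (leftComm K A A A).toLinearMap ∘ₗ (TensorProduct.comm K A A).toLinearMap.lTensor A ∘ₗ
            (leftComm K A A A).toLinearMap ∘ₗ iterCoprodRight α Δsucc Δprec) := by
  have leftComm_leftComm (t) : leftComm K A A A (leftComm K A A A t) = t :=
    LinearMap.congr_fun leftComm_comp_leftComm t
  have braid := LinearMap.congr_fun (leftComm_braid (K := K) (M := A) (N := A) (P := A))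
  simp only [homCoassociator, iterCoprodLeft_sub_sub, iterCoprodRight_sub_sub,
    iterCoprodLeft_comm_left, iterCoprodLeft_comm_right, iterCoprodRight_comm_left,
    iterCoprodRight_comm_right, h.prec_prec, h.succ_prec, h.succ_succ, iterCoprodLeft_add_left,
    iterCoprodRight_add_left]
  ext1 x
  simp only [LinearMap.comp_apply, LinearEquiv.coe_coe] at braid
  simp only [LinearMap.add_apply, LinearMap.sub_apply, LinearMap.comp_apply, LinearMap.id_apply,
    LinearEquiv.coe_coe, map_add, map_sub, leftComm_leftComm, ← braid]
  abel

theorem IsHomDendriformCoalgebra.isHomPreLieCoproduct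
    (h : IsHomDendriformCoalgebra Δprec Δsucc α) :
    IsHomPreLieCoproduct (Δsucc - (TensorProduct.comm K A A).toLinearMap ∘ₗ Δprec) α := by
  rw [IsHomPreLieCoproduct, h.homCoassociator_eq, ← LinearMap.comp_assoc _ (.id + _),
    LinearMap.comp_add, LinearMap.comp_id, leftComm_comp_leftComm, add_comm]

theorem rotaBaxterWeightZero_homPreLieCoalgebra_general
    (hcoassoc : iterCoprodRight α Δ Δ = iterCoprodLeft α Δ Δ) (hα : R ∘ₗ α = α ∘ₗ R)
    (hR : IsRotaBaxterCooperator Δ R w) :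
    IsHomPreLieCoproduct
      (map R .id ∘ₗ Δ - (TensorProduct.comm K A A).toLinearMap ∘ₗ map .id (R + w • .id) ∘ₗ Δ) α :=
  (hR.isHomDendriformCoalgebra hcoassoc hα).isHomPreLieCoproduct

end PreLie

theorem isHomPreLieCoalgebra_iff_isHomPreLieCoproduct {k V : Type*} [Field k] [AddCommGroup V]
    [Module k V] (Δ : V →ₗ[k] V ⊗[k] V) (α : V →ₗ[k] V) :
    IsHomPreLieCoalgebra Δ α ↔ IsHomPreLieCoproduct Δ α :=
  Iff.rfl

/-- A Hom-coassociative Rota-Baxter coalgebra of weight `0` gives a Hom-preLie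
coalgebra via `Δ = (R ⊗ I) ∘ Δ₀ - τ ∘ (I ⊗ R) ∘ Δ₀`. -/
theorem rotaBaxterWeightZero_homPreLieCoalgebra
    (Δ0 : C →ₗ[F] C ⊗[F] C) (α R : C →ₗ[F] C)
    (h : IsHomCoassociativeRotaBaxter Δ0 α R (0 : F)) :
    IsHomPreLieCoalgebra
      (TensorProduct.map R (LinearMap.id : C →ₗ[F] C) ∘ₗ Δ0 -
        tw ∘ₗ (TensorProduct.map (LinearMap.id : C →ₗ[F] C) R ∘ₗ Δ0)) α := by
  obtain ⟨hcoassoc, hα, hR⟩ := h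
  simpa [isHomPreLieCoalgebra_iff_isHomPreLieCoproduct, tw] using
    rotaBaxterWeightZero_homPreLieCoalgebra_general hcoassoc hα hR
end
end

section
/- Let (C, γ, Δ, α) be a post-Hom-Lie coalgebra over a field of characteristic 0, set Δ̃ = Δ + (1/2)γ, and let γ̃ = (1 − τ)∘Δ̃ be the associated cocommutator, where τ is the flip of C⊗C. Then γ̃ satisfies the Hom-co-Jacobi identity (1 + ξ + ξ²)∘(α⊗γ̃)∘γ̃ = 0, where ξ is the cyclic permutation x⊗y⊗z ↦ y⊗z⊗x; that is, C is a Hom-Lie admissible coalgebra for the comultiplication Δ̃. -/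
open TensorProduct

noncomputable section

variable {F : Type*} [Field F] [CharZero F]
variable {C : Type*} [AddCommGroup C] [Module F C]

/-- Hom-Lie coalgebra axioms for `(C, γ, α)`: skew-cocommutativity,
comultiplicativity, and the Hom-co-Jacobi identity. -/
def IsHomLieCoalgebra (γ : C →ₗ[F] C ⊗[F] C) (α : C →ₗ[F] C) : Prop :=
  (γ = -(tw ∘ₗ γ)) ∧
  (γ ∘ₗ α = TensorProduct.map α α ∘ₗ γ) ∧
  ((LinearMap.id + cyc + cyc ∘ₗ cyc) ∘ₗ (lT α γ ∘ₗ γ) = 0)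

/-- Post-Hom-Lie coalgebra axioms for `(C, γ, Δ, α)`. -/
def IsPostHomLieCoalgebra (γ Δ : C →ₗ[F] C ⊗[F] C) (α : C →ₗ[F] C) : Prop :=
  IsHomLieCoalgebra γ α ∧
  (lT α γ ∘ₗ Δ - rT Δ α ∘ₗ γ - sw12 ∘ₗ (lT α Δ ∘ₗ γ) = 0) ∧
  (rT Δ α ∘ₗ Δ - lT α Δ ∘ₗ Δ - sw12 ∘ₗ (rT Δ α ∘ₗ Δ) +
    sw12 ∘ₗ (lT α Δ ∘ₗ Δ) + rT γ α ∘ₗ Δ = 0)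

/-!
Let `S = 1 + ξ + ξ²` and `δ = (1 - τ) ∘ Δ`. Skew-cocommutativity of `γ` gives `γ̃ = δ + γ`, so the
Hom-co-Jacobi sum of `γ̃` expands into four terms. Since `S ∘ ξ = S`, one may replace
`(α ⊗ f) ∘ τ` by `f ⊗ α` and `α ⊗ (τ ∘ f)` by `(τ ⊗ I) ∘ (α ⊗ f)` under `S`. The second
post-Hom-Lie axiom then turns the `(δ, δ)` term into `S ∘ (γ ⊗ α) ∘ Δ`, the first one turns the sum
of the two mixed terms into `-S ∘ (γ ⊗ α) ∘ Δ`, and the `(γ, γ)` term vanishes by the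
Hom-co-Jacobi identity of `γ`.
-/

section

variable {K V : Type*} [Field K] [AddCommGroup V] [Module K V]

/-- The operator `1 + ξ + ξ²` on `V ⊗ V ⊗ V`, in terms of which the Hom-co-Jacobi identity of
`(γ, α)` reads `cyclicSum ∘ₗ (lT α γ ∘ₗ γ) = 0`. -/
def cyclicSum : V ⊗[K] (V ⊗[K] V) →ₗ[K] V ⊗[K] (V ⊗[K] V) :=
  LinearMap.id + cyc + cyc ∘ₗ cyc

/-- The cocommutator `(1 - τ) ∘ f` of a comultiplication `f`. -/
def cocommutator (f : V →ₗ[K] V ⊗[K] V) : V →ₗ[K] V ⊗[K] V :=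
  f - tw ∘ₗ f

theorem cyc_tmul (x : V) (w : V ⊗[K] V) :
    cyc (x ⊗ₜ[K] w) = TensorProduct.assoc K V V V (w ⊗ₜ[K] x) := by
  induction w with
  | zero => simp
  | tmul y z => simp [cyc, sw12, tw]
  | add v w hv hw => simp only [tmul_add, add_tmul, map_add, hv, hw]

theorem cyc_cyc_cyc (u : V ⊗[K] (V ⊗[K] V)) : cyc (cyc (cyc u)) = u := by
  have h : (cyc ∘ₗ cyc ∘ₗ cyc : V ⊗[K] (V ⊗[K] V) →ₗ[K] _) = LinearMap.id := by
    ext x y z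
    simp [cyc_tmul]
  exact LinearMap.congr_fun h u

theorem cyc_sw12 (u : V ⊗[K] (V ⊗[K] V)) : cyc (sw12 u) = tw.lTensor V u := by
  have h : (cyc ∘ₗ sw12 : V ⊗[K] (V ⊗[K] V) →ₗ[K] _) = tw.lTensor V := by
    ext x y z
    simp [cyc_tmul, sw12, tw]
  exact LinearMap.congr_fun h u

theorem cyclicSum_cyc (u : V ⊗[K] (V ⊗[K] V)) : cyclicSum (cyc u) = cyclicSum u := by
  simp only [cyclicSum, LinearMap.add_apply, LinearMap.comp_apply, LinearMap.id_apply,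
    cyc_cyc_cyc]
  abel

theorem lT_add (α : V →ₗ[K] V) (f g : V →ₗ[K] V ⊗[K] V) : lT α (f + g) = lT α f + lT α g :=
  TensorProduct.map_add_right α f g

theorem lT_sub (α : V →ₗ[K] V) (f g : V →ₗ[K] V ⊗[K] V) : lT α (f - g) = lT α f - lT α g :=
  (TensorProduct.mapBilinear (.id K) V V V (V ⊗[K] V) α).map_sub f g

theorem lT_tw_comp (α : V →ₗ[K] V) (f : V →ₗ[K] V ⊗[K] V) (u : V ⊗[K] V) :
    lT α (tw ∘ₗ f) u = cyc (sw12 (lT α f u)) := by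
  rw [cyc_sw12, lT, lT, ← LinearMap.comp_apply, LinearMap.lTensor_comp_map]

theorem rT_cocommutator (α : V →ₗ[K] V) (f : V →ₗ[K] V ⊗[K] V) (u : V ⊗[K] V) :
    rT (cocommutator f) α u = rT f α u - sw12 (rT f α u) := by
  have h : rT (cocommutator f) α = rT f α - sw12 ∘ₗ rT f α := by
    ext x y
    simp [cocommutator, rT, sw12, sub_tmul]
  exact LinearMap.congr_fun h u

theorem cyc_lT_tw (α : V →ₗ[K] V) (f : V →ₗ[K] V ⊗[K] V) (u : V ⊗[K] V) :
    cyc (lT α f (tw u)) = rT f α u := by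
  have h : cyc ∘ₗ lT α f ∘ₗ tw = rT f α := by
    ext x y
    simp [lT, rT, tw, cyc_tmul]
  exact LinearMap.congr_fun h u

theorem cyclicSum_lT_tw (α : V →ₗ[K] V) (f : V →ₗ[K] V ⊗[K] V) (u : V ⊗[K] V) :
    cyclicSum (lT α f (tw u)) = cyclicSum (rT f α u) := by
  rw [← cyclicSum_cyc, cyc_lT_tw]

theorem cyclicSum_lT_tw_comp (α : V →ₗ[K] V) (f : V →ₗ[K] V ⊗[K] V) (u : V ⊗[K] V) :
    cyclicSum (lT α (tw ∘ₗ f) u) = cyclicSum (sw12 (lT α f u)) := by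
  rw [lT_tw_comp, cyclicSum_cyc]

theorem cyclicSum_lT_cocommutator_apply (α : V →ₗ[K] V) (f g : V →ₗ[K] V ⊗[K] V) (x : V) :
    cyclicSum (lT α f (cocommutator g x)) =
      cyclicSum (lT α f (g x)) - cyclicSum (rT f α (g x)) := by
  rw [cocommutator, LinearMap.sub_apply, LinearMap.comp_apply, map_sub, map_sub, cyclicSum_lT_tw]

theorem cyclicSum_lT_cocommutator (α : V →ₗ[K] V) (f : V →ₗ[K] V ⊗[K] V) (u : V ⊗[K] V) :
    cyclicSum (lT α (cocommutator f) u) =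
      cyclicSum (lT α f u) - cyclicSum (sw12 (lT α f u)) := by
  rw [cocommutator, lT_sub, LinearMap.sub_apply, map_sub, cyclicSum_lT_tw_comp]

theorem cyclicSum_lT_cocommutator_cocommutator {γ Δ : V →ₗ[K] V ⊗[K] V} {α : V →ₗ[K] V}
    (hpost : rT Δ α ∘ₗ Δ - lT α Δ ∘ₗ Δ - sw12 ∘ₗ (rT Δ α ∘ₗ Δ) +
      sw12 ∘ₗ (lT α Δ ∘ₗ Δ) + rT γ α ∘ₗ Δ = 0) (x : V) :
    cyclicSum (lT α (cocommutator Δ) (cocommutator Δ x)) = cyclicSum (rT γ α (Δ x)) := by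
  have hx : rT γ α (Δ x) = lT α Δ (Δ x) - sw12 (lT α Δ (Δ x)) -
      (rT Δ α (Δ x) - sw12 (rT Δ α (Δ x))) := by
    have h := LinearMap.congr_fun hpost x
    simp only [LinearMap.add_apply, LinearMap.sub_apply, LinearMap.comp_apply,
      LinearMap.zero_apply] at h
    linear_combination (norm := module) h
  rw [cyclicSum_lT_cocommutator_apply, cyclicSum_lT_cocommutator, rT_cocommutator, hx]
  simp only [map_sub]

theorem cyclicSum_lT_cocommutator_add_swap {γ Δ : V →ₗ[K] V ⊗[K] V} {α : V →ₗ[K] V}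
    (hskew : γ = -(tw ∘ₗ γ))
    (hcompat : lT α γ ∘ₗ Δ - rT Δ α ∘ₗ γ - sw12 ∘ₗ (lT α Δ ∘ₗ γ) = 0) (x : V) :
    cyclicSum (lT α γ (cocommutator Δ x)) + cyclicSum (lT α (cocommutator Δ) (γ x)) =
      -cyclicSum (rT γ α (Δ x)) := by
  have hγΔ : lT α γ (Δ x) = rT Δ α (γ x) + sw12 (lT α Δ (γ x)) :=
    sub_eq_iff_eq_add'.mp (sub_eq_zero.mp (LinearMap.congr_fun hcompat x))
  have hΔγ : cyclicSum (lT α Δ (γ x)) = -cyclicSum (rT Δ α (γ x)) := by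
    have hx : γ x = -tw (γ x) := LinearMap.congr_fun hskew x
    rw [← cyclicSum_lT_tw, ← map_neg, ← map_neg, ← hx]
  rw [cyclicSum_lT_cocommutator_apply, cyclicSum_lT_cocommutator, hγΔ, hΔγ, map_add]
  abel

theorem cyclicSum_comp_lT_cocommutator_add {γ Δ : V →ₗ[K] V ⊗[K] V} {α : V →ₗ[K] V}
    (hskew : γ = -(tw ∘ₗ γ)) (hjacobi : cyclicSum ∘ₗ (lT α γ ∘ₗ γ) = 0)
    (hcompat : lT α γ ∘ₗ Δ - rT Δ α ∘ₗ γ - sw12 ∘ₗ (lT α Δ ∘ₗ γ) = 0)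
    (hpost : rT Δ α ∘ₗ Δ - lT α Δ ∘ₗ Δ - sw12 ∘ₗ (rT Δ α ∘ₗ Δ) +
      sw12 ∘ₗ (lT α Δ ∘ₗ Δ) + rT γ α ∘ₗ Δ = 0) :
    cyclicSum ∘ₗ (lT α (cocommutator Δ + γ) ∘ₗ (cocommutator Δ + γ)) = 0 := by
  ext1 x
  have hγγ : cyclicSum (lT α γ (γ x)) = 0 := LinearMap.congr_fun hjacobi x
  have hδδ := cyclicSum_lT_cocommutator_cocommutator hpost x
  have hmixed := cyclicSum_lT_cocommutator_add_swap hskew hcompat x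
  simp only [LinearMap.comp_apply, LinearMap.add_apply, LinearMap.zero_apply, lT_add, map_add]
  linear_combination (norm := module) hδδ + hmixed + hγγ

theorem cocommutator_add_half_smul [NeZero (2 : K)] {γ : V →ₗ[K] V ⊗[K] V}
    (hskew : γ = -(tw ∘ₗ γ)) (Δ : V →ₗ[K] V ⊗[K] V) :
    cocommutator (Δ + (1/2 : K) • γ) = cocommutator Δ + γ := by
  have htw : tw ∘ₗ γ = -γ := (neg_eq_iff_eq_neg.mpr hskew).symm
  have hhalf : (1/2 : K) • γ + (1/2 : K) • γ = γ := by
    rw [← add_smul, add_halves, one_smul]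
  rw [cocommutator, cocommutator, LinearMap.comp_add, LinearMap.comp_smul, htw]
  linear_combination (norm := module) hhalf

theorem postHomLieCoalgebra_homLieAdmissible_general [NeZero (2 : K)]
    {γ Δ : V →ₗ[K] V ⊗[K] V} {α : V →ₗ[K] V}
    (hskew : γ = -(tw ∘ₗ γ)) (hjacobi : cyclicSum ∘ₗ (lT α γ ∘ₗ γ) = 0)
    (hcompat : lT α γ ∘ₗ Δ - rT Δ α ∘ₗ γ - sw12 ∘ₗ (lT α Δ ∘ₗ γ) = 0)
    (hpost : rT Δ α ∘ₗ Δ - lT α Δ ∘ₗ Δ - sw12 ∘ₗ (rT Δ α ∘ₗ Δ) +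
      sw12 ∘ₗ (lT α Δ ∘ₗ Δ) + rT γ α ∘ₗ Δ = 0) :
    cyclicSum ∘ₗ (lT α (cocommutator (Δ + (1/2 : K) • γ)) ∘ₗ
      cocommutator (Δ + (1/2 : K) • γ)) = 0 := by
  rw [cocommutator_add_half_smul hskew]
  exact cyclicSum_comp_lT_cocommutator_add hskew hjacobi hcompat hpost

end

/-- For a post-Hom-Lie coalgebra `(C, γ, Δ, α)`, the comultiplication
`Δ̃ = Δ + (1/2)γ` is Hom-Lie admissible: its cocommutator
`γ̃ = (1 - τ) ∘ Δ̃` satisfies the Hom-co-Jacobi identity. -/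
theorem postHomLieCoalgebra_homLieAdmissible
    (γ Δ : C →ₗ[F] C ⊗[F] C) (α : C →ₗ[F] C)
    (h : IsPostHomLieCoalgebra γ Δ α) :
    (LinearMap.id + cyc + cyc ∘ₗ cyc) ∘ₗ
      (lT α ((Δ + (1/2 : F) • γ) - tw ∘ₗ (Δ + (1/2 : F) • γ)) ∘ₗ
        ((Δ + (1/2 : F) • γ) - tw ∘ₗ (Δ + (1/2 : F) • γ))) = 0 := by
  obtain ⟨⟨hskew, -, hjacobi⟩, hcompat, hpost⟩ := h
  exact postHomLieCoalgebra_homLieAdmissible_general hskew hjacobi hcompat hpost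
end
end
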